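/- Fix a prime p. Let (R,m,k) ⊆ (S,n,l) be a finite extension of F-finite noetherian local domains of characteristic p with n ∩ R = m. Let T : S → R be an R-linear map such that σ is injective and a generic isomorphism, T is surjective, and T(n) ⊆ m. Let C be a Cartier subalgebra of C_R such that every φ ∈ C_e has a chosen T-transpose φ^⊤, and assume 1 ∉ sp(R,C) (F-purity). Set 𝔭₀ := sp(R,C) and 𝔮₀ := sp(S,f*C), and assume these are prime ideals (then 𝔮₀ ∩ R = 𝔭₀, so R/𝔭₀ ⊆ S/𝔮₀ is a finite extension of local domains). Let C̄ be the induced Cartier structure on R/𝔭₀, with C̄_e := { additive maps φ̄ : R/𝔭₀ → R/𝔭₀ with φ̄∘π_R = π_R∘φ for some φ ∈ C_e }, π_R : R → R/𝔭₀ the quotient map, and define the induced structure on S/𝔮₀ analogously from (f*C)_e; let ā_e(R/𝔭₀) and ā_e(S/𝔮₀) be the corresponding splitting numbers with respect to the maximal ideals m/𝔭₀ and n/𝔮₀. Assume ā_e(R/𝔭₀) ≠ 0 for some e, set n₀ := gcd{ e ≥ 1 : ā_e(R/𝔭₀) ≠ 0 }, d̄ := dim R/𝔭₀, d̄' := dim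 S/𝔮₀, r_k := [k^{1/p}:k], r_l := [l^{1/p}:l]. If e ↦ ā_{n₀e}(R/𝔭₀)/(p^{n₀e·d̄}·r_k^{n₀e}) converges to a real number r(R,C) and e ↦ ā_{n₀e}(S/𝔮₀)/(p^{n₀e·d̄'}·r_l^{n₀e}) converges to a real number r(S,f*C), then [l : k]·r(S,f*C) = [Frac(S/𝔮₀) : Frac(R/𝔭₀)]·r(R,C). -/

import Mathlib

/-- `p^e`-semilinear additive maps ("Cartier maps"):
`φ (a^{p^e} • x) = a • φ x`. -/
def IsCartierMap (p : ℕ) (A : Type*) [CommSemiring A] {X Y : Type*} [AddCommMonoid X]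
    [AddCommMonoid Y] [Module A X] [Module A Y] (e : ℕ) (φ : X →+ Y) : Prop :=
  ∀ (a : A) (x : X), φ (a ^ p ^ e • x) = a • φ x

/-- A Cartier structure (Cartier subalgebra of `C_X`) on an `A`-module `X`. -/
structure CartierStructure (p : ℕ) (A : Type*) [CommRing A] (X : Type*) [AddCommGroup X]
    [Module A X] where
  carrier : ℕ → Set (X →+ X)
  cartier_mem : ∀ e, 1 ≤ e → ∀ φ ∈ carrier e, IsCartierMap p A e φ
  add_mem : ∀ e, 1 ≤ e → ∀ φ ∈ carrier e, ∀ ψ ∈ carrier e, φ + ψ ∈ carrier e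
  smul_mem : ∀ e, 1 ≤ e → ∀ (a : A), ∀ φ ∈ carrier e,
    (DistribMulAction.toAddMonoidHom X a).comp φ ∈ carrier e
  mul_mem : ∀ e, 1 ≤ e → ∀ (a : A), ∀ φ ∈ carrier e,
    φ.comp (DistribMulAction.toAddMonoidHom X a) ∈ carrier e
  comp_mem : ∀ e d, 1 ≤ e → 1 ≤ d → ∀ φ ∈ carrier e, ∀ ψ ∈ carrier d,
    φ.comp ψ ∈ carrier (e + d)

/-- The `S`-linear map `σ : S → Hom_R(S,R)`, `σ(s)(x) = T(s·x)`, as an `R`-bilinear map. -/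
noncomputable def sigmaT (R S : Type*) [CommRing R] [CommRing S] [Algebra R S]
    (T : S →ₗ[R] R) : S →ₗ[R] (S →ₗ[R] R) :=
  LinearMap.mk₂ R (fun s x => T (s * x))
    (fun s s' x => by show T ((s + s') * x) = T (s * x) + T (s' * x); rw [add_mul, map_add])
    (fun r s x => by show T ((r • s) * x) = r • T (s * x); rw [smul_mul_assoc, map_smul])
    (fun s x x' => by show T (s * (x + x')) = T (s * x) + T (s * x'); rw [mul_add, map_add])
    (fun r s x => by show T (s * (r • x)) = r • T (s * x); rw [mul_smul_comm, map_smul])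

/-- `ψ` is a `T`-transpose of `φ`: `T (ψ s * s') = φ (T (s * s'^{p^e}))`. -/
def IsTranspose (p : ℕ) {R S : Type*} [CommRing R] [CommRing S] [Algebra R S]
    (T : S →ₗ[R] R) (e : ℕ) (φ : R →+ R) (ψ : S →+ S) : Prop :=
  ∀ s s' : S, T (ψ s * s') = φ (T (s * s' ^ p ^ e))

/-- The degree-`e` part of the pulled back Cartier algebra `f^*C`:
finite sums `Σ φᵢ^⊤ · sᵢ` where `(χ · s) x = χ (s * x)`. -/
def pushFam {R S : Type*} [CommRing R] [CommRing S] (D : ℕ → Set (R →+ R))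
    (tr : ℕ → (R →+ R) → (S →+ S)) : ℕ → Set (S →+ S) := fun e =>
  { ψ | ∃ (k : ℕ) (φ : Fin k → R →+ R) (s : Fin k → S), (∀ i, φ i ∈ D e) ∧
      ψ = ∑ i, (tr e (φ i)).comp (AddMonoidHom.mulLeft (s i)) }

/-- The splitting prime of a family of Cartier linear maps on a local ring. -/
def spSet (A : Type*) [CommRing A] [IsLocalRing A] (D : ℕ → Set (A →+ A)) : Set A :=
  { a | ∀ e, 1 ≤ e → ∀ φ ∈ D e, φ a ∈ IsLocalRing.maximalIdeal A }

/-- The length of a module, as the Krull dimension of its submodule lattice. -/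
noncomputable def moduleLength (A : Type*) [Ring A] (M : Type*) [AddCommGroup M]
    [Module A M] : WithBot ℕ∞ :=
  Order.krullDim (Submodule A M)

/-- The splitting number `a_e`: the length (as a left `A`-module) of `D/D^{ns}` where
`D^{ns} = {ϑ ∈ D | ϑ(X) ⊆ m}`, realized as the image of the span of `D` in the quotient by
the span of `D^{ns}`. -/
noncomputable def splitNum (A : Type*) [CommRing A] [IsLocalRing A]
    {X : Type*} [AddCommMonoid X] (D : Set (X →+ A)) : WithBot ℕ∞ :=
  moduleLength A
    ↥(Submodule.map
        (Submodule.span A { ϑ ∈ D | ∀ x, ϑ x ∈ IsLocalRing.maximalIdeal A }).mkQ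
        (Submodule.span A D))

/-- Type synonym for a ring viewed as a module over itself via Frobenius. -/
def FrobMod (A : Type*) := A

instance {A : Type*} [AddCommGroup A] : AddCommGroup (FrobMod A) := ‹AddCommGroup A›

/-- The module structure of `A` on `FrobMod A = A` via the Frobenius `a ↦ a^p`;
`A` is `F`-finite iff `FrobMod A` is a finite module, and `[A^{1/p} : A]` is its rank. -/
noncomputable def frobModule (p : ℕ) (hp : p.Prime) (A : Type*) [CommRing A] [CharP A p] :
    Module A (FrobMod A) :=
  haveI : ExpChar A p := .prime hp
  Module.compHom A (frobenius A p)

/-- The family of maps induced on `A ⧸ I` by a family of maps on `A` (for compatible `I`). -/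
def inducedFam {A : Type*} [CommRing A] (I : Ideal A) (D : ℕ → Set (A →+ A)) :
    ℕ → Set ((A ⧸ I) →+ (A ⧸ I)) := fun e =>
  { φb | ∃ φ ∈ D e, ∀ a : A, φb (Ideal.Quotient.mk I a) = Ideal.Quotient.mk I (φ a) }

section Aux
open IsLocalRing


/-- dimension is invariant under finite injective extension -/
theorem aux_dim_eq {A B : Type*} [CommRing A] [CommRing B] [IsDomain A] [IsDomain B]
    [Algebra A B] [Module.Finite A B]
    (hinj : Function.Injective (algebraMap A B)) : ringKrullDim A = ringKrullDim B := by
  have hint : Algebra.IsIntegral A B := inferInstance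
  apply le_antisymm
  · unfold ringKrullDim
    rw [Order.krullDim]
    refine iSup_le fun l => ?_
    obtain ⟨Q, hQ, hQp, hQ2⟩ := Ideal.exists_ideal_over_prime_of_isIntegral_of_isPrime
      (S := B) l.head.asIdeal (⊥ : Ideal B)
      (by rw [← RingHom.ker_eq_comap_bot, (RingHom.injective_iff_ker_eq_bot _).1 hinj]; exact bot_le)
    have : Q.LiesOver (RelSeries.head l).asIdeal := ⟨hQ2.symm⟩
    obtain ⟨L, hL, -, -⟩ := Ideal.exists_ltSeries_of_hasGoingUp l Q
    rw [← hL]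
    exact Order.LTSeries.length_le_krullDim L
  · refine Order.krullDim_le_of_strictMono (PrimeSpectrum.comap (algebraMap A B)) ?_
    intro P Q h
    exact Ideal.IsIntegral.comap_lt_comap (R := A) (I := P.asIdeal) (J := Q.asIdeal) h

theorem aux_torsion {A M N : Type*} [CommRing A] [IsDomain A] [AddCommGroup M] [AddCommGroup N]
    [Module A M] [Module A N] [Module.Finite A N] (f : M →ₗ[A] N) (hf : Function.Injective f)
    (hr : Module.finrank A M = Module.finrank A N) :
    ∃ c : A, c ≠ 0 ∧ ∀ y : N, c • y ∈ LinearMap.range f := by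
  have h1 := rank_quotient_add_rank_of_isDomain (LinearMap.range f)
  have h2 : Module.finrank A (LinearMap.range f) = Module.finrank A N := by
    rw [← hr]; exact (LinearEquiv.ofInjective f hf).finrank_eq.symm
  have hfin : Module.rank A N < Cardinal.aleph0 := Module.rank_lt_aleph0 A N
  have h3 : Module.rank A (LinearMap.range f) < Cardinal.aleph0 :=
    lt_of_le_of_lt (h1 ▸ le_add_self) hfin
  have h4 : Module.rank A (N ⧸ LinearMap.range f) < Cardinal.aleph0 :=
    lt_of_le_of_lt (h1 ▸ le_self_add) hfin
  have h5 : Module.rank A (N ⧸ LinearMap.range f) = 0 := by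
    have := congrArg Cardinal.toNat h1
    rw [Cardinal.toNat_add h4 h3] at this
    change Module.finrank A _ + Module.finrank A _ = Module.finrank A _ at this
    rw [h2] at this
    have h6 : Cardinal.toNat (Module.rank A (N ⧸ LinearMap.range f)) = 0 := by
      change Module.finrank A _ = 0
      omega
    rcases Cardinal.toNat_eq_zero.1 h6 with h | h
    · exact h
    · exact absurd h4 (not_lt.2 h)
  rw [rank_eq_zero_iff] at h5
  have ht : Module.IsTorsion A (N ⧸ LinearMap.range f) := by
    intro x
    obtain ⟨a, ha, hax⟩ := h5 x
    exact ⟨⟨a, mem_nonZeroDivisors_of_ne_zero ha⟩, hax⟩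
  obtain ⟨c, hc1, hc2⟩ := Submodule.annihilator_top_inter_nonZeroDivisors ht
  refine ⟨c, nonZeroDivisors.ne_zero hc2, fun y => ?_⟩
  have := (Submodule.mem_annihilator.1 hc1) (Submodule.Quotient.mk y) trivial
  rwa [← Submodule.Quotient.mk_smul, Submodule.Quotient.mk_eq_zero] at this

/-- quotient lengths monotone -/
theorem aux_len_mono {A : Type*} [CommRing A] {M : Type*} [AddCommGroup M] [Module A M]
    {I J : Submodule A M} (h : I ≤ J) : Module.length A (M ⧸ J) ≤ Module.length A (M ⧸ I) :=
  Module.length_le_of_surjective (Submodule.factor h) (Submodule.factor_surjective h)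

/-- key exact sequence bound -/
theorem aux_len_quot {A : Type*} [CommRing A] {M N : Type*} [AddCommGroup M] [Module A M]
    [AddCommGroup N] [Module A N] (f : M →ₗ[A] N) (M' : Submodule A M) (N' : Submodule A N)
    (h : M' ≤ N'.comap f) :
    Module.length A (N ⧸ N') ≤ Module.length A (M ⧸ M') +
      Module.length A (N ⧸ (LinearMap.range f ⊔ N')) := by
  let g : (M ⧸ M') →ₗ[A] (N ⧸ N') := Submodule.mapQ M' N' f h
  have e := Module.length_eq_add_of_exact (LinearMap.range g).subtype (LinearMap.range g).mkQ
    (Submodule.subtype_injective _) (Submodule.mkQ_surjective _)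
    (LinearMap.exact_subtype_mkQ _)
  rw [e]
  refine add_le_add (Module.length_le_of_surjective g.rangeRestrict g.surjective_rangeRestrict) ?_
  have hle : (LinearMap.range f ⊔ N') ≤ LinearMap.ker ((LinearMap.range g).mkQ ∘ₗ N'.mkQ) := by
    refine sup_le ?_ ?_
    · rintro _ ⟨x, rfl⟩
      simp only [LinearMap.mem_ker, LinearMap.comp_apply, Submodule.mkQ_apply,
        Submodule.Quotient.mk_eq_zero]
      exact ⟨Submodule.Quotient.mk x, rfl⟩
    · intro y hy
      have : N'.mkQ y = 0 := by simpa using hy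
      simp only [LinearMap.mem_ker, LinearMap.comp_apply, this, map_zero]
  refine Module.length_le_of_surjective (Submodule.liftQ _ _ hle) ?_
  intro z
  obtain ⟨z, rfl⟩ := Submodule.mkQ_surjective _ z
  obtain ⟨z, rfl⟩ := Submodule.mkQ_surjective _ z
  exact ⟨Submodule.Quotient.mk z, rfl⟩

theorem aux_len_pow {A : Type*} [CommRing A] (I : Ideal A) (x : A) (q : ℕ) :
    Module.length A (A ⧸ (I ⊔ Ideal.span {x ^ q})) ≤
      q * Module.length A (A ⧸ (I ⊔ Ideal.span {x})) := by
  induction q with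
  | zero =>
    have : (I ⊔ Ideal.span {x ^ 0}) = ⊤ := by simp
    rw [this]
    have : Subsingleton (A ⧸ (⊤ : Ideal A)) := Ideal.Quotient.subsingleton_iff.2 rfl
    simp
  | succ q ih =>
    have := aux_len_quot (LinearMap.mulLeft A (x ^ q)) (I ⊔ Ideal.span {x} : Ideal A)
      (I ⊔ Ideal.span {x ^ (q + 1)} : Ideal A) (by
        refine sup_le (fun y hy => ?_) ?_
        · exact Ideal.mem_sup_left (I.mul_mem_left _ hy)
        · rw [Ideal.span_le]
          rintro _ rfl
          refine Ideal.mem_sup_right ?_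
          simp only [LinearMap.mulLeft_apply, ← pow_succ]
          exact Ideal.mem_span_singleton_self _)
    refine this.trans ?_
    rw [Nat.cast_succ, add_mul, one_mul, add_comm]
    refine add_le_add (le_trans (aux_len_mono ?_) ih) le_rfl
    refine sup_le ?_ ?_
    · exact le_sup_of_le_right le_sup_left
    · rw [Ideal.span_le]
      rintro _ rfl
      exact Submodule.mem_sup_left ⟨1, by simp⟩

theorem aux_len_pows {A : Type*} [CommRing A] (q : ℕ) (s : Finset A) (I : Ideal A) :
    Module.length A (A ⧸ (I ⊔ Ideal.span ((fun x => x ^ q) '' (s : Set A)))) ≤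
      (q ^ s.card : ℕ) * Module.length A (A ⧸ (I ⊔ Ideal.span (s : Set A))) := by
  classical
  induction s using Finset.induction_on generalizing I with
  | empty => rw [Finset.coe_empty, Set.image_empty]; simp
  | insert a s ha ih =>
    rw [Finset.coe_insert, Set.image_insert_eq, Ideal.span_insert, Ideal.span_insert, ← sup_assoc,
      ← sup_assoc, Finset.card_insert_of_notMem ha]
    refine (ih _).trans ?_
    rw [sup_right_comm I (Ideal.span {a ^ q}), sup_right_comm I (Ideal.span {a})]
    rw [pow_succ, Nat.cast_mul, mul_assoc]
    refine mul_le_mul_right ?_ _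
    exact aux_len_pow _ _ _


theorem aux_sop {A : Type*} [CommRing A] [IsDomain A] [IsLocalRing A] [IsNoetherianRing A]
    (d : ℕ) (hd : ringKrullDim A = d) (c : A) (hc : c ≠ 0) (hu : ¬ IsUnit c) :
    ∃ t : Finset A, (∀ x ∈ t, x ∈ maximalIdeal A) ∧ t.card + 1 ≤ d ∧
      Module.length A (A ⧸ (Ideal.span {c} ⊔ Ideal.span (t : Set A))) ≠ ⊤ := by
  classical
  have hcm : c ∈ maximalIdeal A := (mem_maximalIdeal c).2 hu
  have hlt : Ideal.span {c} ≤ maximalIdeal A := by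
    rw [Ideal.span_le]; simpa using hcm
  have : Nontrivial (A ⧸ Ideal.span {c}) :=
    Ideal.Quotient.nontrivial_iff.2 (fun h => (maximalIdeal.isMaximal A).ne_top (top_le_iff.1 (h ▸ hlt)))
  have : IsLocalRing (A ⧸ Ideal.span {c}) :=
    IsLocalRing.of_surjective' (Ideal.Quotient.mk _) Ideal.Quotient.mk_surjective
  have hdim := ringKrullDim_quotient_span_singleton_succ_eq_ringKrullDim_of_mem_nonZeroDivisors
    (mem_nonZeroDivisors_of_ne_zero hc) hcm
  rw [hd] at hdim
  obtain ⟨J, hJm, hJr, hJh⟩ := Ideal.exists_spanRank_eq_and_height_eq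
    (maximalIdeal (A ⧸ Ideal.span {c})) (maximalIdeal.isMaximal _).ne_top
  have hh := IsLocalRing.maximalIdeal_height_eq_ringKrullDim (R := A ⧸ Ideal.span {c})
  rw [← hh] at hdim
  have hdim2 : (maximalIdeal (A ⧸ Ideal.span {c})).height + 1 = (d : ℕ∞) := by exact_mod_cast hdim
  obtain ⟨d', hd'⟩ : ∃ d' : ℕ, (maximalIdeal (A ⧸ Ideal.span {c})).height = d' := by
    refine ⟨(maximalIdeal (A ⧸ Ideal.span {c})).height.toNat, (ENat.natCast_toNat ?_).symm⟩
    intro h; rw [h] at hdim2; simp at hdim2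
  rw [hd'] at hdim2 hJr hJh
  have hdd : d' + 1 = d := by exact_mod_cast hdim2
  have hsf : J.spanFinrank = d' := by
    rw [Submodule.spanFinrank, hJr]; simp
  have hmin : maximalIdeal (A ⧸ Ideal.span {c}) ∈ J.minimalPrimes :=
    Ideal.mem_minimalPrimes_of_height_le hJm (by rw [hJh, hd'])
  obtain ⟨s, hs, hsJ⟩ : ∃ s : Finset (A ⧸ Ideal.span {c}),
      s.card = d' ∧ Ideal.span (s : Set (A ⧸ Ideal.span {c})) = J := by
    have hJfg : J.FG := IsNoetherian.noetherian J
    have h1 := Submodule.FG.generators_ncard hJfg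
    have hfin : (Submodule.generators J).Finite := Submodule.FG.finite_generators hJfg
    refine ⟨hfin.toFinset, ?_, ?_⟩
    · rw [← Set.ncard_eq_toFinset_card _ hfin, h1, hsf]
    · rw [hfin.coe_toFinset]; exact Submodule.span_generators J
  let lift := Function.surjInv (Ideal.Quotient.mk_surjective (I := Ideal.span {c}))
  have hlift : ∀ y, Ideal.Quotient.mk (Ideal.span {c}) (lift y) = y :=
    Function.surjInv_eq Ideal.Quotient.mk_surjective
  refine ⟨s.image lift, ?_, ?_, ?_⟩
  · intro x hx
    obtain ⟨y, hy, rfl⟩ := Finset.mem_image.1 hx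
    have hyJ : y ∈ maximalIdeal (A ⧸ Ideal.span {c}) := hJm (hsJ ▸ Ideal.subset_span hy)
    by_contra hx'
    have : IsUnit (lift y) := by simpa using hx'
    have := this.map (Ideal.Quotient.mk (Ideal.span {c}))
    rw [hlift] at this
    exact (mem_maximalIdeal _).1 hyJ this
  · have := Finset.card_image_le (s := s) (f := lift)
    omega
  · set K := (Ideal.span {c} ⊔ Ideal.span ((s.image lift : Finset A) : Set A)) with hK
    have hprime : ∀ P : Ideal A, P.IsPrime → K ≤ P → P = maximalIdeal A := by
      intro P hP hKP
      have hcP : Ideal.span {c} ≤ P := le_sup_left.trans hKP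
      have hPp : (P.map (Ideal.Quotient.mk (Ideal.span {c}))).IsPrime :=
        Ideal.map_isPrime_of_surjective Ideal.Quotient.mk_surjective (by rwa [Ideal.mk_ker])
      have hJP : J ≤ P.map (Ideal.Quotient.mk (Ideal.span {c})) := by
        rw [← hsJ, Ideal.span_le]
        intro y hy
        rw [← hlift y]
        refine Ideal.mem_map_of_mem _ (hKP (Ideal.mem_sup_right (Ideal.subset_span ?_)))
        exact Finset.mem_coe.2 (Finset.mem_image_of_mem _ hy)
      have hmP := hmin.2 ⟨hPp, hJP⟩ (le_maximalIdeal hPp.ne_top)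
      refine le_antisymm (le_maximalIdeal hP.ne_top) ?_
      intro x hx
      have hx2 : Ideal.Quotient.mk (Ideal.span {c}) x ∈ maximalIdeal (A ⧸ Ideal.span {c}) := by
        rw [mem_maximalIdeal]
        intro h
        have := IsLocalHom.of_surjective (Ideal.Quotient.mk (Ideal.span {c}))
          Ideal.Quotient.mk_surjective
        have := (isUnit_of_map_unit (Ideal.Quotient.mk (Ideal.span {c})) x h)
        exact (mem_maximalIdeal x).1 hx this
      have := (Ideal.mem_map_iff_of_surjective _ Ideal.Quotient.mk_surjective).1 (hmP hx2)
      obtain ⟨y, hy, hxy⟩ := this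
      have := Ideal.Quotient.eq.1 hxy
      have h3 := P.sub_mem hy (hcP this)
      simpa using h3
    have : IsArtinianRing (A ⧸ K) := by
      rw [isArtinianRing_iff_isNoetherianRing_krullDimLE_zero]
      refine ⟨inferInstance, ?_⟩
      rw [Ring.krullDimLE_zero_iff]
      intro P hP
      have hle : K ≤ P.comap (Ideal.Quotient.mk K) := by
        intro x hx
        rw [Ideal.mem_comap, Ideal.Quotient.eq_zero_iff_mem.2 hx]; exact P.zero_mem
      have heq := hprime _ (hP.comap _) hle
      have : (P.comap (Ideal.Quotient.mk K)).IsMaximal := heq ▸ maximalIdeal.isMaximal A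
      rw [← Ideal.map_comap_of_surjective _ Ideal.Quotient.mk_surjective P]
      refine (Ideal.map_eq_top_or_isMaximal_of_surjective _ Ideal.Quotient.mk_surjective
        this).resolve_left ?_
      rw [Ideal.map_comap_of_surjective _ Ideal.Quotient.mk_surjective P]
      exact hP.ne_top
    rw [Module.length_eq_of_surjective (R := A ⧸ K) (S := A) (M := A ⧸ K) Ideal.Quotient.mk_surjective]
    exact Module.length_ne_top

/-- the small bound -/
theorem aux_small {A : Type*} [CommRing A] [IsDomain A] [IsLocalRing A] [IsNoetherianRing A]
    (d : ℕ) (hd : ringKrullDim A = d) (c : A) (hc : c ≠ 0) :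
    ∃ C : ℕ, ∀ (q : ℕ) (J : Ideal A), 1 ≤ q → (∀ a ∈ maximalIdeal A, a ^ q ∈ J) →
      q * Module.length A (A ⧸ (Ideal.span {c} ⊔ J)) ≤ (C * q ^ d : ℕ) := by
  by_cases hu : IsUnit c
  · refine ⟨0, fun q J _ _ => ?_⟩
    have h1 : (Ideal.span {c} ⊔ J) = ⊤ := by
      rw [Ideal.span_singleton_eq_top.2 hu, top_sup_eq]
    rw [h1]
    have : Subsingleton (A ⧸ (⊤ : Ideal A)) := Ideal.Quotient.subsingleton_iff.2 rfl
    simp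
  obtain ⟨t, htm, htd, hfl⟩ := aux_sop d hd c hc hu
  obtain ⟨C, hC⟩ := ENat.ne_top_iff_exists.1 hfl
  refine ⟨C, fun q J hq hJ => ?_⟩
  have key := aux_len_pows q t (Ideal.span {c})
  rw [← hC] at key
  have h2 : Module.length A (A ⧸ (Ideal.span {c} ⊔ J)) ≤ ((q ^ t.card : ℕ) * (C : ℕ∞)) := by
    refine (aux_len_mono (sup_le_sup_left ?_ _)).trans key
    rw [Ideal.span_le]
    rintro _ ⟨x, hx, rfl⟩
    exact hJ x (htm x hx)
  calc (q : ℕ∞) * Module.length A (A ⧸ (Ideal.span {c} ⊔ J))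
      ≤ q * ((q ^ t.card : ℕ) * (C : ℕ∞)) := mul_le_mul_right h2 _
    _ = (C * q ^ (t.card + 1) : ℕ) := by push_cast; ring
    _ ≤ _ := by
      exact_mod_cast Nat.mul_le_mul_left _ (Nat.pow_le_pow_right hq htd)



theorem aux_cok {A : Type*} [CommRing A] {M N : Type*} [AddCommGroup M] [Module A M]
    [AddCommGroup N] [Module A N] [Module.Finite A N] :
    ∃ g : ℕ, ∀ (f : M →ₗ[A] N) (c : A) (J : Ideal A) (N' : Submodule A N),
      (∀ y, c • y ∈ LinearMap.range f) → (∀ a ∈ J, ∀ y : N, a • y ∈ N') →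
      Module.length A (N ⧸ (LinearMap.range f ⊔ N')) ≤
        g * Module.length A (A ⧸ (Ideal.span {c} ⊔ J)) := by
  obtain ⟨g, π, hπ⟩ := Module.Finite.exists_fin' A N
  refine ⟨g, fun f c J N' hc hJ => ?_⟩
  set U := LinearMap.range f ⊔ N'
  have hK : ∀ y : N, (Ideal.span {c} ⊔ J) ≤
      LinearMap.ker (LinearMap.toSpanSingleton A (N ⧸ U) (U.mkQ y)) := by
    intro y
    refine sup_le ?_ ?_
    · rw [Ideal.span_le]
      rintro _ rfl
      simp only [SetLike.mem_coe, LinearMap.mem_ker, LinearMap.toSpanSingleton_apply]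
      rw [← map_smul, Submodule.mkQ_apply, Submodule.Quotient.mk_eq_zero]
      exact Submodule.mem_sup_left (hc y)
    · intro a ha
      simp only [LinearMap.mem_ker, LinearMap.toSpanSingleton_apply]
      rw [← map_smul, Submodule.mkQ_apply, Submodule.Quotient.mk_eq_zero]
      exact Submodule.mem_sup_right (hJ a ha y)
  let Φ : (Fin g → A ⧸ (Ideal.span {c} ⊔ J)) →ₗ[A] (N ⧸ U) :=
    ∑ i, (Submodule.liftQ (Ideal.span {c} ⊔ J)
      (LinearMap.toSpanSingleton A (N ⧸ U) (U.mkQ (π (Pi.single i 1)))) (hK _)) ∘ₗ LinearMap.proj i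
  have hΦ : Function.Surjective Φ := by
    intro z
    obtain ⟨y, rfl⟩ := U.mkQ_surjective z
    obtain ⟨v, rfl⟩ := hπ y
    refine ⟨fun i => Submodule.Quotient.mk (v i), ?_⟩
    simp only [Φ, LinearMap.sum_apply, LinearMap.comp_apply, LinearMap.proj_apply,
      Submodule.liftQ_apply, LinearMap.toSpanSingleton_apply]
    conv_rhs => rw [pi_eq_sum_univ' v]
    simp only [map_sum, map_smul]
  have := Module.length_le_of_surjective Φ hΦ
  refine this.trans (le_of_eq ?_)
  simp

theorem aux_compare {A B : Type*} [CommRing A] [IsDomain A] [IsLocalRing A] [IsNoetherianRing A]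
    [CommRing B] [Algebra A B] [Module.Finite A B] (d : ℕ) (hd : ringKrullDim A = d)
    (T : B →ₗ[A] A) (hT : ∀ b, (∀ b', T (b * b') = 0) → b = 0) :
    ∃ C : ℕ, ∀ (q : ℕ) (J : Ideal A) (J' : Ideal B), 1 ≤ q → (∀ a ∈ maximalIdeal A, a ^ q ∈ J) →
      (∀ b, b ∈ J' ↔ ∀ b', T (b * b') ∈ J) →
      q * Module.length A (B ⧸ J') ≤
        q * (Module.finrank A B * Module.length A (A ⧸ J)) + (C * q ^ d : ℕ) ∧
      q * (Module.finrank A B * Module.length A (A ⧸ J)) ≤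
        q * Module.length A (B ⧸ J') + (C * q ^ d : ℕ) := by
  set n := Module.finrank A B with hn
  obtain ⟨u, hu⟩ : ∃ u : Fin n → B, LinearIndependent A u :=
    exists_linearIndependent_of_le_finrank le_rfl
  let α : (Fin n → A) →ₗ[A] B := Fintype.linearCombination A u
  have hα : Function.Injective α := by
    rw [injective_iff_map_eq_zero]
    intro v hv
    funext i
    exact Fintype.linearIndependent_iff.1 hu v
      (by simpa [α, Fintype.linearCombination_apply] using hv) i
  obtain ⟨c, hc, hcr⟩ := aux_torsion α hα (by simp [hn])
  let Θ : B →ₗ[A] (Fin n → A) := LinearMap.pi fun i => T ∘ₗ LinearMap.mulRight A (u i)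
  have hΘa : ∀ b i, Θ b i = T (b * u i) := fun b i => rfl
  have hΘ : Function.Injective Θ := by
    rw [injective_iff_map_eq_zero]
    intro b hb
    refine hT b fun b' => ?_
    obtain ⟨v, hv⟩ := hcr b'
    have h1 : c * T (b * b') = 0 := by
      rw [← smul_eq_mul, ← map_smul, ← mul_smul_comm, ← hv]
      simp only [α, Fintype.linearCombination_apply, Finset.mul_sum, map_sum, mul_smul_comm, map_smul]
      refine Finset.sum_eq_zero fun i _ => ?_
      rw [← hΘa, hb]; simp
    exact (mul_eq_zero.1 h1).resolve_left hc
  obtain ⟨c', hc', hcr'⟩ := aux_torsion Θ hΘ (by simp [hn])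
  obtain ⟨C₁, h₁⟩ := aux_small d hd c hc
  obtain ⟨C₂, h₂⟩ := aux_small d hd c' hc'
  obtain ⟨g₁, hg₁⟩ := aux_cok (A := A) (M := Fin n → A) (N := B)
  obtain ⟨g₂, hg₂⟩ := aux_cok (A := A) (M := B) (N := Fin n → A)
  refine ⟨g₁ * C₁ + g₂ * C₂, fun q J J' hq hJ hJ' => ?_⟩
  let JA : Submodule A (Fin n → A) := Submodule.pi Set.univ fun _ => J
  have hJA : ∀ v, v ∈ JA ↔ ∀ i, v i ∈ J := fun v => by simp [JA, Submodule.mem_pi]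
  have hlenJA : Module.length A ((Fin n → A) ⧸ JA) = n * Module.length A (A ⧸ J) := by
    rw [(Submodule.quotientPi (fun _ : Fin n => J)).length_eq]
    simp
  have hlenJ' : Module.length A (B ⧸ J'.restrictScalars A) = Module.length A (B ⧸ J') :=
    (Submodule.Quotient.restrictScalarsEquiv A J').length_eq
  have hsm : ∀ a ∈ J, ∀ y : B, a • y ∈ J'.restrictScalars A := by
    intro a ha y
    rw [Submodule.restrictScalars_mem, hJ']
    intro b'
    rw [smul_mul_assoc, map_smul]
    exact J.mul_mem_right _ ha
  have e1 := aux_len_quot α JA (J'.restrictScalars A) (by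
    intro v hv
    rw [hJA] at hv
    simp only [Submodule.mem_comap, α, Fintype.linearCombination_apply]
    exact Submodule.sum_mem _ fun i _ => hsm _ (hv i) _)
  have e2 := aux_len_quot Θ (J'.restrictScalars A) JA (by
    intro b hb
    rw [Submodule.restrictScalars_mem, hJ'] at hb
    rw [Submodule.mem_comap, hJA]
    exact fun i => hb _)
  rw [hlenJA, hlenJ'] at e1 e2
  have f1 := hg₁ α c J _ hcr hsm
  have f2 := hg₂ Θ c' J JA hcr' (fun a ha y => by
    rw [hJA]; exact fun i => J.mul_mem_right _ ha)
  have k1 := h₁ q J hq hJ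
  have k2 := h₂ q J hq hJ
  constructor
  · calc (q : ℕ∞) * Module.length A (B ⧸ J') ≤ q * (n * Module.length A (A ⧸ J) +
          g₁ * Module.length A (A ⧸ (Ideal.span {c} ⊔ J))) :=
          mul_le_mul_right (e1.trans (add_le_add le_rfl f1)) _
      _ = q * (n * Module.length A (A ⧸ J)) +
          g₁ * (q * Module.length A (A ⧸ (Ideal.span {c} ⊔ J))) := by ring
      _ ≤ q * (n * Module.length A (A ⧸ J)) + g₁ * (C₁ * q ^ d : ℕ) :=
          add_le_add le_rfl (mul_le_mul_right k1 _)
      _ ≤ _ := by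
          refine add_le_add le_rfl ?_
          norm_cast
          nlinarith [Nat.zero_le (g₂ * C₂ * q ^ d)]
  · calc (q : ℕ∞) * (n * Module.length A (A ⧸ J)) ≤ q * (Module.length A (B ⧸ J') +
          g₂ * Module.length A (A ⧸ (Ideal.span {c'} ⊔ J))) :=
          mul_le_mul_right (e2.trans (add_le_add le_rfl f2)) _
      _ = q * (Module.length A (B ⧸ J')) +
          g₂ * (q * Module.length A (A ⧸ (Ideal.span {c'} ⊔ J))) := by ring
      _ ≤ q * (Module.length A (B ⧸ J')) + g₂ * (C₂ * q ^ d : ℕ) :=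
          add_le_add le_rfl (mul_le_mul_right k2 _)
      _ ≤ _ := by
          refine add_le_add le_rfl ?_
          norm_cast
          nlinarith [Nat.zero_le (g₁ * C₁ * q ^ d)]

theorem aux_len_add {A M : Type*} [CommRing A] [AddCommGroup M] [Module A M] (N : Submodule A M) :
    Module.length A M = Module.length A N + Module.length A (M ⧸ N) :=
  Module.length_eq_add_of_exact N.subtype N.mkQ (Submodule.subtype_injective _)
    (Submodule.mkQ_surjective _) (LinearMap.exact_subtype_mkQ _)

theorem aux_len_ker {A M N : Type*} [CommRing A] [AddCommGroup M] [Module A M] [AddCommGroup N]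
    [Module A N] (r : M →ₗ[A] N) :
    Module.length A M = Module.length A (LinearMap.ker r) + Module.length A (LinearMap.range r) := by
  rw [aux_len_add (LinearMap.ker r)]
  congr 1
  exact LinearEquiv.length_eq r.quotKerEquivRange

theorem aux_hom_len {A V : Type*} [CommRing A] [IsLocalRing A] [AddCommGroup V] [Module A V]
    (hV : IsFiniteLength A V) :
    Module.length A (V →ₗ[A] ResidueField A) ≤ Module.length A V := by
  induction hV with
  | of_subsingleton => simp
  | @of_simple_quotient M _ _ N hs hN ih =>
    have e := Module.length_eq_add_of_exact N.subtype N.mkQ (Submodule.subtype_injective _)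
      (Submodule.mkQ_surjective _) (LinearMap.exact_subtype_mkQ _)
    rw [e, Module.length_eq_one A (M ⧸ N)]
    let r : (M →ₗ[A] ResidueField A) →ₗ[A] (N →ₗ[A] ResidueField A) := LinearMap.lcomp A _ N.subtype
    have e2 : Module.length A (M →ₗ[A] ResidueField A) =
        Module.length A (LinearMap.ker r) + Module.length A (LinearMap.range r) := by
      exact aux_len_ker r
    rw [e2, add_comm]
    refine add_le_add ((Module.length_le_of_injective (LinearMap.range r).subtype
      (Submodule.subtype_injective _)).trans ih) ?_
    have hs' := hs
    obtain ⟨v, hv⟩ := @exists_ne (M ⧸ N) (IsSimpleModule.nontrivial A (M ⧸ N)) (0 : M ⧸ N)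
    obtain ⟨v, rfl⟩ := N.mkQ_surjective v
    have hspan : ∀ x : M, ∃ a : A, x - a • v ∈ N := by
      intro x
      have : N.mkQ x ∈ Submodule.span A {N.mkQ v} := by
        rw [IsSimpleModule.span_singleton_eq_top A hv]; trivial
      obtain ⟨a, ha⟩ := Submodule.mem_span_singleton.1 this
      refine ⟨a, ?_⟩
      rw [← Submodule.Quotient.mk_eq_zero, ← Submodule.mkQ_apply, map_sub, map_smul, ha, sub_self]
    let ev : LinearMap.ker r →ₗ[A] ResidueField A :=
      (LinearMap.applyₗ v) ∘ₗ (LinearMap.ker r).subtype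
    have hev : Function.Injective ev := by
      rw [injective_iff_map_eq_zero]
      rintro ⟨φ, hφ⟩ h
      have h0 : φ v = 0 := h
      ext x
      obtain ⟨a, ha⟩ := hspan x
      have h1 : φ (x - a • v) = 0 := LinearMap.congr_fun (LinearMap.mem_ker.1 hφ) ⟨_, ha⟩
      rw [map_sub, map_smul, h0, smul_zero, sub_zero] at h1
      simpa using h1
    refine (Module.length_le_of_injective ev hev).trans ?_
    have : Module.length A (ResidueField A) = 1 := by
      rw [Module.length_eq_of_surjective (R := ResidueField A) (residue_surjective (R := A))]
      exact Module.length_eq_one _ _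
    exact this.le

theorem aux_perfect {A M V : Type*} [CommRing A] [IsLocalRing A] [AddCommGroup V] [Module A V]
    [AddCommGroup M] [Module A M] (β : M →ₗ[A] V →ₗ[A] ResidueField A)
    (h1 : Function.Injective β) (h2 : Function.Injective β.flip)
    (hV : Module.length A V ≠ ⊤) : Module.length A M = Module.length A V := by
  have e1 := (Module.length_le_of_injective β h1).trans
    (aux_hom_len (Module.length_ne_top_iff.1 hV))
  have hM : Module.length A M ≠ ⊤ := ne_top_of_le_ne_top hV e1
  exact le_antisymm e1 ((Module.length_le_of_injective β.flip h2).trans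
    (aux_hom_len (Module.length_ne_top_iff.1 hM)))



noncomputable def rdeg {K L : Type*} [Field K] [Field L] (f : K →+* L) : ℕ :=
  letI := f.toAlgebra
  Module.finrank K L

theorem rdeg_comp {K L E : Type*} [Field K] [Field L] [Field E] (f : K →+* L) (g : L →+* E) :
    rdeg (g.comp f) = rdeg f * rdeg g := by
  letI := f.toAlgebra
  letI := g.toAlgebra
  let _ := (g.comp f).toAlgebra
  haveI : IsScalarTower K L E := IsScalarTower.of_algebraMap_eq fun x => rfl
  exact (Module.finrank_mul_finrank K L E).symm

theorem rdeg_bij {K L : Type*} [Field K] [Field L] (f : K →+* L) (hf : Function.Bijective f) :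
    rdeg f = 1 := by
  letI := f.toAlgebra
  have : Module.finrank K K = Module.finrank K L :=
    (LinearEquiv.ofBijective (Algebra.linearMap K L) hf).finrank_eq
  rw [Module.finrank_self] at this
  exact this.symm

theorem rdeg_conj {K L : Type*} [Field K] [Field L] (f : K →+* K) (f' : L →+* L) (g : K →+* L)
    (h : g.comp f = f'.comp g) (h0 : rdeg g ≠ 0) : rdeg f = rdeg f' := by
  have := congrArg rdeg h
  rw [rdeg_comp, rdeg_comp, mul_comm] at this
  exact Nat.eq_of_mul_eq_mul_left (Nat.pos_of_ne_zero h0) this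

theorem rdeg_frob {K L : Type*} [Field K] [Field L] (p : ℕ) [ExpChar K p] [ExpChar L p]
    (g : K →+* L) (h0 : rdeg g ≠ 0) : rdeg (frobenius K p) = rdeg (frobenius L p) :=
  rdeg_conj _ _ g (by ext x; simp [frobenius_def]) h0

theorem rdeg_iter (K : Type*) [Field K] (p : ℕ) [ExpChar K p] (e : ℕ) :
    rdeg (iterateFrobenius K p e) = rdeg (frobenius K p) ^ e := by
  induction e with
  | zero =>
    rw [pow_zero, iterateFrobenius_zero]
    exact rdeg_bij _ Function.bijective_id
  | succ e ih =>
    rw [pow_succ, ← ih, ← rdeg_comp]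
    congr 1
    ext x
    simp [iterateFrobenius_def, frobenius_def, pow_succ, pow_mul]

def Fr (_p _e : ℕ) (A : Type*) := A

instance {p e : ℕ} {A : Type*} [CommRing A] : CommRing (Fr p e A) := ‹CommRing A›
instance {p e : ℕ} {A : Type*} [CommRing A] [IsLocalRing A] : IsLocalRing (Fr p e A) := ‹IsLocalRing A›
noncomputable instance {p e : ℕ} {A : Type*} [CommRing A] [ExpChar A p] : Algebra A (Fr p e A) :=
  (iterateFrobenius A p e).toAlgebra

instance {p e : ℕ} {A : Type*} [CommRing A] [ExpChar A p] [IsLocalRing A] [Fact p.Prime] :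
    IsLocalHom (algebraMap A (Fr p e A)) := by
  constructor
  intro a ha
  have h : IsUnit (a ^ p ^ e) := ha
  exact (isUnit_pow_iff (pow_ne_zero _ (Fact.out : p.Prime).ne_zero)).1 h

theorem Fr_smul {p e : ℕ} {A : Type*} [CommRing A] [ExpChar A p] (a : A) (J : Ideal (Fr p e A))
    (x : Fr p e A) :
    a • (Ideal.Quotient.mk J x) = Ideal.Quotient.mk J ((show Fr p e A from a ^ p ^ e) * x) := rfl

theorem Fr_len {p e : ℕ} {A : Type*} [CommRing A] [ExpChar A p] [IsLocalRing A] [Fact p.Prime]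
    [ExpChar (ResidueField A) p] (J : Ideal A)
    (h0 : rdeg (frobenius (ResidueField A) p) ≠ 0) :
    Module.length A (Fr p e A ⧸ (show Ideal (Fr p e A) from J)) =
      Module.length A (A ⧸ J) * (rdeg (frobenius (ResidueField A) p) ^ e : ℕ) := by
  rw [IsLocalRing.length_restrictScalars A (Fr p e A)]
  congr 1
  have h1 : Module.finrank (ResidueField A) (ResidueField (Fr p e A)) =
      rdeg (frobenius (ResidueField A) p) ^ e := by
    rw [← rdeg_iter]
    unfold rdeg
    have : (algebraMap (ResidueField A) (ResidueField (Fr p e A))) =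
      (iterateFrobenius (ResidueField A) p e) := by
      ext x
      obtain ⟨x, rfl⟩ := residue_surjective x
      rfl
    have h2 : (inferInstance : Algebra (ResidueField A) (ResidueField (Fr p e A))) =
      (iterateFrobenius (ResidueField A) p e).toAlgebra := Algebra.algebra_ext _ _ (fun r => by
        exact DFunLike.congr_fun this r)
    exact congrArg (fun i : Algebra (ResidueField A) (ResidueField (Fr p e A)) =>
      @Module.finrank (ResidueField A) (ResidueField (Fr p e A)) _ _ i.toModule) h2
  have : Module.Finite (ResidueField A) (ResidueField (Fr p e A)) :=
    Module.finite_of_finrank_pos (by rw [h1]; positivity)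
  rw [Module.length_eq_finrank, h1]

theorem aux_M_len {A X Z : Type*} [CommRing A] [AddCommGroup X] [Module A X] [AddCommGroup Z]
    [Module A Z] (P N : Submodule A X) (γ : P →ₗ[A] Z)
    (h : ∀ x : P, γ x = 0 ↔ (x : X) ∈ N) :
    Module.length A (Submodule.map N.mkQ P) = Module.length A (LinearMap.range γ) := by
  let δ : P →ₗ[A] (X ⧸ N) := N.mkQ ∘ₗ P.subtype
  have hr : Submodule.map N.mkQ P = LinearMap.range δ := by
    rw [LinearMap.range_comp, Submodule.range_subtype]
  have hk : LinearMap.ker δ = LinearMap.ker γ := by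
    ext x
    simp [δ, h]
  have e1 := LinearEquiv.length_eq δ.quotKerEquivRange
  have e2 := LinearEquiv.length_eq γ.quotKerEquivRange
  rw [hr, ← e1, ← e2, hk]

theorem splitNum_eq {p e : ℕ} {A : Type*} [CommRing A] [ExpChar A p] [IsLocalRing A] [Fact p.Prime]
    [ExpChar (ResidueField A) p] (D : Set (A →+ A)) (J : Ideal A)
    (hcart : ∀ φ ∈ D, ∀ a x : A, φ (a ^ p ^ e * x) = a * φ x)
    (hadd : ∀ φ ∈ D, ∀ ψ ∈ D, φ + ψ ∈ D)
    (hsmul : ∀ (a : A), ∀ φ ∈ D, a • φ ∈ D)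
    (hJ : ∀ x, x ∈ J ↔ ∀ φ ∈ D, φ x ∈ maximalIdeal A)
    (hfin : Module.length A (A ⧸ J) ≠ ⊤)
    (h0 : rdeg (frobenius (ResidueField A) p) ≠ 0) :
    splitNum A D = ((Module.length A (A ⧸ J) * (rdeg (frobenius (ResidueField A) p) ^ e : ℕ) : ℕ∞) :
      WithBot ℕ∞) := by
  set P := Submodule.span A D
  set N := Submodule.span A { ϑ ∈ D | ∀ x, ϑ x ∈ maximalIdeal A } with hN
  have hPmem : ∀ φ ∈ P, φ = 0 ∨ φ ∈ D := by
    intro φ hφ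
    induction hφ using Submodule.span_induction with
    | mem x hx => exact Or.inr hx
    | zero => exact Or.inl rfl
    | add x y _ _ hx hy =>
      rcases hx with rfl | hx
      · simpa using hy
      · rcases hy with rfl | hy
        · right; simpa using hx
        · exact Or.inr (hadd _ hx _ hy)
    | smul a x _ hx =>
      rcases hx with rfl | hx
      · left; simp
      · exact Or.inr (hsmul _ _ hx)
  have hPc : ∀ φ ∈ P, ∀ a x : A, φ (a ^ p ^ e * x) = a * φ x := by
    intro φ hφ a x
    rcases hPmem φ hφ with rfl | h
    · simp
    · exact hcart _ h _ _
  have hPJ : ∀ φ ∈ P, ∀ x ∈ J, φ x ∈ maximalIdeal A := by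
    intro φ hφ x hx
    rcases hPmem φ hφ with rfl | h
    · simp
    · exact (hJ x).1 hx _ h
  have hNm : ∀ φ ∈ N, ∀ x, φ x ∈ maximalIdeal A := by
    intro φ hφ
    induction hφ using Submodule.span_induction with
    | mem x hx => exact hx.2
    | zero => intro x; simp
    | add f g _ _ hx hy => exact fun x => Ideal.add_mem _ (hx x) (hy x)
    | smul a f _ hx => exact fun x => Ideal.mul_mem_left _ _ (hx x)
  let JF : Ideal (Fr p e A) := J
  let V := Fr p e A ⧸ JF
  let g0 : P → (V →+ ResidueField A) := fun φ =>
    QuotientAddGroup.lift (Submodule.toAddSubgroup JF)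
      ((residue A).toAddMonoidHom.comp (φ : A →+ A)) (fun x hx => by
        show residue A ((φ : A →+ A) x) = 0
        rw [residue_eq_zero_iff]
        exact hPJ _ φ.2 x hx)
  have hg0 : ∀ φ : P, ∀ x : Fr p e A, g0 φ (Ideal.Quotient.mk JF x) = residue A ((φ : A →+ A) x) :=
    fun φ x => rfl
  let g1 : P → (V →ₗ[A] ResidueField A) := fun φ =>
    { toFun := g0 φ
      map_add' := map_add _
      map_smul' := by
        intro a v
        obtain ⟨x, rfl⟩ := Ideal.Quotient.mk_surjective v
        rw [Fr_smul, hg0, hg0]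
        have := hPc _ φ.2 a x
        exact (congrArg (residue A) this).trans (by rw [map_mul]; rfl) }
  have hg1 : ∀ φ : P, ∀ x : Fr p e A, g1 φ (Ideal.Quotient.mk JF x) = residue A ((φ : A →+ A) x) :=
    fun φ x => rfl
  let γ : P →ₗ[A] (V →ₗ[A] ResidueField A) :=
    { toFun := g1
      map_add' := by
        intro φ ψ
        refine LinearMap.ext fun v => ?_
        obtain ⟨x, rfl⟩ := Ideal.Quotient.mk_surjective v
        rw [LinearMap.add_apply, hg1, hg1, hg1, ← map_add]; rfl
      map_smul' := by
        intro a φ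
        refine LinearMap.ext fun v => ?_
        obtain ⟨x, rfl⟩ := Ideal.Quotient.mk_surjective v
        rw [LinearMap.smul_apply, hg1, hg1]
        exact (map_mul (residue A) a _) }
  have hγ : ∀ (φ : P) (x : Fr p e A), γ φ (Ideal.Quotient.mk JF x) = residue A ((φ : A →+ A) x) :=
    fun φ x => rfl
  have hker : ∀ φ : P, γ φ = 0 ↔ (φ : A →+ A) ∈ N := by
    intro φ
    constructor
    · intro h
      rcases hPmem φ φ.2 with h' | h'
      · rw [h']; exact N.zero_mem
      · refine Submodule.subset_span ⟨h', fun x => ?_⟩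
        rw [← residue_eq_zero_iff]
        exact (hγ φ x).symm.trans (by rw [h]; rfl)
    · intro h
      ext v
      obtain ⟨x, rfl⟩ := Ideal.Quotient.mk_surjective v
      rw [hγ]
      exact (residue_eq_zero_iff _).2 (hNm _ h x)
  have hVlen : Module.length A V =
      Module.length A (A ⧸ J) * (rdeg (frobenius (ResidueField A) p) ^ e : ℕ) := Fr_len J h0
  let β : (LinearMap.range γ) →ₗ[A] V →ₗ[A] ResidueField A := (LinearMap.range γ).subtype
  have hβ : Function.Injective β := Submodule.subtype_injective _
  have hflip : Function.Injective β.flip := by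
    rw [injective_iff_map_eq_zero]
    intro v hv
    obtain ⟨x, rfl⟩ := Ideal.Quotient.mk_surjective v
    rw [Ideal.Quotient.eq_zero_iff_mem]
    refine (hJ x).2 fun φ hφ => ?_
    have := LinearMap.congr_fun hv ⟨γ ⟨φ, Submodule.subset_span hφ⟩, LinearMap.mem_range_self _ _⟩
    exact (residue_eq_zero_iff _).1 this
  have hper := @aux_perfect A (LinearMap.range γ) V _ _ _ _ _ _ β hβ hflip (by
      rw [hVlen]
      exact WithTop.mul_ne_top hfin (ENat.coe_ne_top _))
  rw [← hVlen, ← hper, ← aux_M_len P N γ hker, Module.coe_length]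
  rfl



theorem aux_finlen {A : Type*} [CommRing A] [IsLocalRing A] [IsNoetherianRing A] (K : Ideal A)
    (q : ℕ) (hK : ∀ a ∈ maximalIdeal A, a ^ q ∈ K) : Module.length A (A ⧸ K) ≠ ⊤ := by
  have : IsArtinianRing (A ⧸ K) := by
    rw [isArtinianRing_iff_isNoetherianRing_krullDimLE_zero]
    refine ⟨inferInstance, ?_⟩
    rw [Ring.krullDimLE_zero_iff]
    intro P hP
    have hle : K ≤ P.comap (Ideal.Quotient.mk K) := by
      intro x hx
      rw [Ideal.mem_comap, Ideal.Quotient.eq_zero_iff_mem.2 hx]; exact P.zero_mem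
    have heq : P.comap (Ideal.Quotient.mk K) = maximalIdeal A :=
      le_antisymm (le_maximalIdeal (hP.comap _).ne_top) fun a ha =>
        (hP.comap _).mem_of_pow_mem q (hle (hK a ha))
    have : (P.comap (Ideal.Quotient.mk K)).IsMaximal := heq ▸ maximalIdeal.isMaximal A
    rw [← Ideal.map_comap_of_surjective _ Ideal.Quotient.mk_surjective P]
    refine (Ideal.map_eq_top_or_isMaximal_of_surjective _ Ideal.Quotient.mk_surjective
      this).resolve_left ?_
    rw [Ideal.map_comap_of_surjective _ Ideal.Quotient.mk_surjective P]
    exact hP.ne_top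
  rw [Module.length_eq_of_surjective (R := A ⧸ K) (S := A) (M := A ⧸ K) Ideal.Quotient.mk_surjective]
  exact Module.length_ne_top

structure GoodFam (p e : ℕ) {A : Type*} [CommRing A] (D : Set (A →+ A)) : Prop where
  cart : ∀ φ ∈ D, ∀ a x : A, φ (a ^ p ^ e * x) = a * φ x
  add : ∀ φ ∈ D, ∀ ψ ∈ D, φ + ψ ∈ D
  smul : ∀ (a : A), ∀ φ ∈ D, a • φ ∈ D
  pre : ∀ (a : A), ∀ φ ∈ D, φ.comp (AddMonoidHom.mulLeft a) ∈ D

def GoodFam.J {p e : ℕ} {A : Type*} [CommRing A] [IsLocalRing A] {D : Set (A →+ A)}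
    (h : GoodFam p e D) : Ideal A where
  carrier := {x | ∀ φ ∈ D, φ x ∈ maximalIdeal A}
  add_mem' := fun {x y} hx hy φ hφ => by
    rw [map_add]; exact Ideal.add_mem _ (hx φ hφ) (hy φ hφ)
  zero_mem' := fun φ _ => by rw [map_zero]; exact Ideal.zero_mem _
  smul_mem' := fun a x hx φ hφ => hx _ (h.pre a φ hφ)

theorem GoodFam.mem_J {p e : ℕ} {A : Type*} [CommRing A] [IsLocalRing A] {D : Set (A →+ A)}
    (h : GoodFam p e D) (x : A) : x ∈ h.J ↔ ∀ φ ∈ D, φ x ∈ maximalIdeal A := Iff.rfl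

theorem GoodFam.pow_mem {p e : ℕ} {A : Type*} [CommRing A] [IsLocalRing A] {D : Set (A →+ A)}
    (h : GoodFam p e D) : ∀ a ∈ maximalIdeal A, a ^ p ^ e ∈ h.J := by
  intro a ha φ hφ
  have := h.cart φ hφ a 1
  rw [mul_one] at this
  rw [this]
  exact Ideal.mul_mem_right _ _ ha

theorem GoodFam.induced {p e : ℕ} {A : Type*} [CommRing A] (I : Ideal A) {D : ℕ → Set (A →+ A)}
    (h : GoodFam p e (D e)) : GoodFam p e (inducedFam I D e) where
  cart := by
    rintro φb ⟨φ, hφ, he⟩ a x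
    obtain ⟨a, rfl⟩ := Ideal.Quotient.mk_surjective a
    obtain ⟨x, rfl⟩ := Ideal.Quotient.mk_surjective x
    rw [← map_pow, ← map_mul, he, he, h.cart φ hφ, map_mul]
  add := by
    rintro φb ⟨φ, hφ, he⟩ ψb ⟨ψ, hψ, he'⟩
    exact ⟨φ + ψ, h.add _ hφ _ hψ, fun a => by simp [he, he']⟩
  smul := by
    rintro a φb ⟨φ, hφ, he⟩
    obtain ⟨a, rfl⟩ := Ideal.Quotient.mk_surjective a
    refine ⟨a • φ, h.smul _ _ hφ, fun x => ?_⟩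
    rw [AddMonoidHom.smul_apply, AddMonoidHom.smul_apply, he, smul_eq_mul, smul_eq_mul, map_mul]
  pre := by
    rintro a φb ⟨φ, hφ, he⟩
    obtain ⟨a, rfl⟩ := Ideal.Quotient.mk_surjective a
    refine ⟨_, h.pre a φ hφ, fun x => ?_⟩
    show φb (Ideal.Quotient.mk I a * Ideal.Quotient.mk I x) = Ideal.Quotient.mk I (φ (a * x))
    rw [← map_mul, he]

theorem mk_mem_max {A : Type*} [CommRing A] [IsLocalRing A] (I : Ideal A) [IsLocalRing (A ⧸ I)]
    (x : A) : Ideal.Quotient.mk I x ∈ maximalIdeal (A ⧸ I) ↔ x ∈ maximalIdeal A := by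
  have := IsLocalHom.of_surjective (Ideal.Quotient.mk I) Ideal.Quotient.mk_surjective
  rw [mem_maximalIdeal, mem_maximalIdeal, mem_nonunits_iff, mem_nonunits_iff,
    isUnit_map_iff]

theorem induced_mem {A : Type*} [CommRing A] [IsLocalRing A] (I : Ideal A) [IsLocalRing (A ⧸ I)]
    (D : ℕ → Set (A →+ A)) (e : ℕ) (hI : ∀ φ ∈ D e, ∀ x ∈ I, φ x ∈ I) (x : A) :
    (∀ φb ∈ inducedFam I D e, φb (Ideal.Quotient.mk I x) ∈ maximalIdeal (A ⧸ I)) ↔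
      ∀ φ ∈ D e, φ x ∈ maximalIdeal A := by
  constructor
  · intro h φ hφ
    let φb : (A ⧸ I) →+ (A ⧸ I) := QuotientAddGroup.lift (Submodule.toAddSubgroup I)
      ((Ideal.Quotient.mk I).toAddMonoidHom.comp φ) (fun y hy => by
        show Ideal.Quotient.mk I (φ y) = 0
        rw [Ideal.Quotient.eq_zero_iff_mem]
        exact hI φ hφ y hy)
    rw [← mk_mem_max I]
    exact h φb ⟨φ, hφ, fun a => rfl⟩
  · rintro h φb ⟨φ, hφ, he⟩
    rw [he, mk_mem_max]
    exact h φ hφ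

theorem rdeg_algebraMap {K L : Type*} [Field K] [Field L] [i : Algebra K L] :
    rdeg (algebraMap K L) = Module.finrank K L := by
  have h2 : (algebraMap K L).toAlgebra = i := Algebra.algebra_ext _ _ (fun r => rfl)
  unfold rdeg
  rw [h2]

theorem core {A B : Type*} [CommRing A] [IsDomain A] [IsLocalRing A] [IsNoetherianRing A]
    [CommRing B] [IsLocalRing B] [IsNoetherianRing B] [Algebra A B] [Module.Finite A B]
    [IsLocalHom (algebraMap A B)] (p : ℕ) [Fact p.Prime] [ExpChar A p] [ExpChar B p]
    [ExpChar (ResidueField A) p] [ExpChar (ResidueField B) p]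
    (d : ℕ) (hd : ringKrullDim A = d)
    (T : B →ₗ[A] A) (hT : ∀ b, (∀ b', T (b * b') = 0) → b = 0) (r lk : ℕ)
    (hr : r ≠ 0) (hlk0 : lk ≠ 0) (hrA : rdeg (frobenius (ResidueField A) p) = r)
    (hrB : rdeg (frobenius (ResidueField B) p) = r)
    (hlk : rdeg (ResidueField.map (algebraMap A B)) = lk) :
    ∃ C : ℕ, ∀ (e : ℕ) (D : Set (A →+ A)) (D' : Set (B →+ B)) (hD : GoodFam p e D)
      (hD' : GoodFam p e D'), (∀ b, b ∈ hD'.J ↔ ∀ b', T (b * b') ∈ hD.J) → ∀ a a' : ℕ,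
      ((a : ℕ∞) : WithBot ℕ∞) = splitNum A D → ((a' : ℕ∞) : WithBot ℕ∞) = splitNum B D' →
      p ^ e * (lk * a') ≤ p ^ e * (Module.finrank A B * a) + C * (p ^ e) ^ d * r ^ e ∧
      p ^ e * (Module.finrank A B * a) ≤ p ^ e * (lk * a') + C * (p ^ e) ^ d * r ^ e := by
  obtain ⟨C, hC⟩ := aux_compare (A := A) (B := B) d hd T hT
  refine ⟨C, fun e D D' hD hD' hJ a a' ha ha' => ?_⟩
  have hc := hC (p ^ e) hD.J hD'.J (Nat.one_le_pow _ _ (Fact.out : p.Prime).pos) hD.pow_mem hJ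
  have fA := aux_finlen hD.J _ hD.pow_mem
  have fB := aux_finlen hD'.J _ hD'.pow_mem
  rw [splitNum_eq D hD.J hD.cart hD.add hD.smul hD.mem_J fA (by rwa [hrA]), hrA] at ha
  rw [splitNum_eq D' hD'.J hD'.cart hD'.add hD'.smul hD'.mem_J fB (by rwa [hrB]), hrB] at ha'
  have hkl : Module.length (ResidueField A) (ResidueField B) = lk := by
    have h1 : Module.finrank (ResidueField A) (ResidueField B) = lk := by
      rw [← hlk, ← rdeg_algebraMap]; rfl
    have : Module.Finite (ResidueField A) (ResidueField B) :=
      Module.finite_of_finrank_pos (by rw [h1]; positivity)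
    rw [Module.length_eq_finrank, h1]
  have hX : Module.length A (B ⧸ hD'.J) = Module.length B (B ⧸ hD'.J) * lk := by
    rw [IsLocalRing.length_restrictScalars A B, hkl]
  rw [hX] at hc
  obtain ⟨Y, hY⟩ := ENat.ne_top_iff_exists.1 fA
  obtain ⟨Z, hZ⟩ := ENat.ne_top_iff_exists.1 fB
  rw [← hY] at ha hc
  rw [← hZ] at ha' hc
  have ha2 : a = Y * r ^ e := by exact_mod_cast ha
  have ha2' : a' = Z * r ^ e := by exact_mod_cast ha'
  obtain ⟨h1, h2⟩ := hc
  have h1' : p ^ e * (Z * lk) ≤ p ^ e * (Module.finrank A B * Y) + C * (p ^ e) ^ d := by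
    exact_mod_cast h1
  have h2' : p ^ e * (Module.finrank A B * Y) ≤ p ^ e * (Z * lk) + C * (p ^ e) ^ d := by
    exact_mod_cast h2
  subst ha2 ha2'
  have m1 := Nat.mul_le_mul_right (r ^ e) h1'
  have m2 := Nat.mul_le_mul_right (r ^ e) h2'
  constructor
  · calc _ = p ^ e * (Z * lk) * r ^ e := by ring
      _ ≤ _ := m1
      _ = _ := by ring
  · calc _ = p ^ e * (Module.finrank A B * Y) * r ^ e := by ring
      _ ≤ _ := m2
      _ = _ := by ring

theorem core_lim (p n d r lk dLK C : ℕ) (hp : p.Prime) (hn : 0 < n) (hr : r ≠ 0) (a a' : ℕ → ℕ)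
    (h : ∀ e, 1 ≤ e → p ^ e * (lk * a' e) ≤ p ^ e * (dLK * a e) + C * (p ^ e) ^ d * r ^ e ∧
      p ^ e * (dLK * a e) ≤ p ^ e * (lk * a' e) + C * (p ^ e) ^ d * r ^ e) (x y : ℝ)
    (hx : Filter.Tendsto (fun e : ℕ => (a (n * e) : ℝ) / ((p : ℝ) ^ (n * e * d) * (r : ℝ) ^ (n * e)))
      Filter.atTop (nhds x))
    (hy : Filter.Tendsto (fun e : ℕ => (a' (n * e) : ℝ) / ((p : ℝ) ^ (n * e * d) * (r : ℝ) ^ (n * e)))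
      Filter.atTop (nhds y)) : (lk : ℝ) * y = dLK * x := by
  have h1 := (hy.const_mul (lk : ℝ)).sub (hx.const_mul (dLK : ℝ))
  have h2 : Filter.Tendsto (fun e : ℕ => (C : ℝ) * (((p : ℝ) ^ n)⁻¹) ^ e) Filter.atTop
      (nhds ((C : ℝ) * 0)) := by
    refine Filter.Tendsto.const_mul _ (tendsto_pow_atTop_nhds_zero_of_lt_one (by positivity) ?_)
    have : (1 : ℝ) < p := by exact_mod_cast hp.one_lt
    exact inv_lt_one_of_one_lt₀ (one_lt_pow₀ this hn.ne')
  rw [mul_zero] at h2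
  have h3 := squeeze_zero_norm' (f := fun e : ℕ =>
    (lk : ℝ) * ((a' (n * e) : ℝ) / ((p : ℝ) ^ (n * e * d) * (r : ℝ) ^ (n * e))) -
    (dLK : ℝ) * ((a (n * e) : ℝ) / ((p : ℝ) ^ (n * e * d) * (r : ℝ) ^ (n * e)))) (by
      filter_upwards [Filter.eventually_ge_atTop 1] with e he
      obtain ⟨u1, u2⟩ := h (n * e) (Nat.mul_pos hn he)
      have hp0 : (0 : ℝ) < p := by exact_mod_cast hp.pos
      have hr0 : (0 : ℝ) < r := by exact_mod_cast Nat.pos_of_ne_zero hr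
      have v1 : (p : ℝ) ^ (n * e) * (lk * a' (n * e)) ≤ (p : ℝ) ^ (n * e) * (dLK * a (n * e)) +
        C * ((p : ℝ) ^ (n * e)) ^ d * r ^ (n * e) := by exact_mod_cast u1
      have v2 : (p : ℝ) ^ (n * e) * (dLK * a (n * e)) ≤ (p : ℝ) ^ (n * e) * (lk * a' (n * e)) +
        C * ((p : ℝ) ^ (n * e)) ^ d * r ^ (n * e) := by exact_mod_cast u2
      rw [inv_pow, ← pow_mul, pow_mul (p : ℝ) (n * e) d]
      set P := (p : ℝ) ^ (n * e)
      have hP : 0 < P := by positivity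
      set W := P ^ d * (r : ℝ) ^ (n * e)
      have hW : 0 < W := by positivity
      rw [Real.norm_eq_abs, ← mul_div_assoc, ← mul_div_assoc, ← sub_div, abs_div, abs_of_pos hW,
        div_le_iff₀ hW, abs_le]
      have e1 : C * P⁻¹ * W = (C * P ^ d * r ^ (n * e)) / P := by
        simp only [W]; field_simp
      rw [e1, ← neg_div, div_le_iff₀ hP, le_div_iff₀ hP]
      constructor <;> linarith) h2
  have := tendsto_nhds_unique h1 h3
  linarith



theorem push_good {p e : ℕ} {R S : Type*} [CommRing R] [CommRing S] (D : ℕ → Set (R →+ R))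
    (tr : ℕ → (R →+ R) → (S →+ S)) (h : ∀ φ ∈ D e, IsCartierMap p S e (tr e φ)) :
    GoodFam p e (pushFam D tr e) where
  cart := by
    rintro _ ⟨k, φ, s, hφ, rfl⟩ a x
    simp only [AddMonoidHom.finsetSum_apply, AddMonoidHom.comp_apply, AddMonoidHom.coe_mulLeft,
      Finset.mul_sum]
    refine Finset.sum_congr rfl fun i _ => ?_
    have := h _ (hφ i) a (s i * x)
    rw [smul_eq_mul, smul_eq_mul] at this
    rw [← this]
    congr 1; ring
  add := by
    rintro _ ⟨k, φ, s, hφ, rfl⟩ _ ⟨k', φ', s', hφ', rfl⟩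
    refine ⟨k + k', Fin.append φ φ', Fin.append s s', ?_, ?_⟩
    · intro i
      refine Fin.addCases (fun i => ?_) (fun i => ?_) i
      · rw [Fin.append_left]; exact hφ i
      · rw [Fin.append_right]; exact hφ' i
    · rw [Fin.sum_univ_add]
      simp only [Fin.append_left, Fin.append_right]
  smul := by
    rintro a _ ⟨k, φ, s, hφ, rfl⟩
    refine ⟨k, φ, fun i => a ^ p ^ e * s i, hφ, ?_⟩
    ext x
    simp only [AddMonoidHom.finsetSum_apply, AddMonoidHom.comp_apply, AddMonoidHom.coe_mulLeft,
      AddMonoidHom.smul_apply, Finset.smul_sum]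
    refine Finset.sum_congr rfl fun i _ => ?_
    have := h _ (hφ i) a (s i * x)
    rw [← this, smul_eq_mul, mul_assoc]
  pre := by
    rintro a _ ⟨k, φ, s, hφ, rfl⟩
    refine ⟨k, φ, fun i => s i * a, hφ, ?_⟩
    ext x
    simp only [AddMonoidHom.finsetSum_apply, AddMonoidHom.comp_apply, AddMonoidHom.coe_mulLeft,
      mul_assoc]

theorem car_good {p e : ℕ} {R : Type*} [CommRing R] (C : CartierStructure p R R) (he : 1 ≤ e) :
    GoodFam p e (C.carrier e) where
  cart := fun φ hφ a x => C.cartier_mem e he φ hφ a x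
  add := C.add_mem e he
  smul := fun a φ hφ => by
    have := C.smul_mem e he a φ hφ
    exact this
  pre := fun a φ hφ => by
    have := C.mul_mem e he a φ hφ
    exact this

theorem max_crit {R S : Type*} [CommRing R] [CommRing S] [IsLocalRing R] [IsLocalRing S]
    [Algebra R S] (T : S →ₗ[R] R) (hTsurj : Function.Surjective T)
    (hTn : ∀ s ∈ maximalIdeal S, T s ∈ maximalIdeal R) (x : S) :
    x ∈ maximalIdeal S ↔ ∀ s, T (x * s) ∈ maximalIdeal R := by
  refine ⟨fun h s => hTn _ (Ideal.mul_mem_right _ _ h), fun h => ?_⟩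
  by_contra hx
  rw [mem_maximalIdeal, mem_nonunits_iff, not_not] at hx
  obtain ⟨u, rfl⟩ := hx
  obtain ⟨y, hy⟩ := hTsurj 1
  have := h (↑u⁻¹ * y)
  rw [Units.mul_inv_cancel_left, hy] at this
  exact (Ideal.ne_top_iff_one _).1 (maximalIdeal.isMaximal R).ne_top this

theorem push_crit {p e : ℕ} {R S : Type*} [CommRing R] [CommRing S] [IsLocalRing R] [IsLocalRing S]
    [Algebra R S] (T : S →ₗ[R] R) (hTsurj : Function.Surjective T)
    (hTn : ∀ s ∈ maximalIdeal S, T s ∈ maximalIdeal R) (D : ℕ → Set (R →+ R))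
    (tr : ℕ → (R →+ R) → (S →+ S)) (h : ∀ φ ∈ D e, IsTranspose p T e φ (tr e φ)) (x : S) :
    (∀ ψ ∈ pushFam D tr e, ψ x ∈ maximalIdeal S) ↔
      ∀ b, ∀ φ ∈ D e, φ (T (x * b)) ∈ maximalIdeal R := by
  constructor
  · intro H b φ hφ
    have := H ((tr e φ).comp (AddMonoidHom.mulLeft b))
      ⟨1, fun _ => φ, fun _ => b, fun _ => hφ, by simp⟩
    have h2 := (max_crit T hTsurj hTn _).1 this 1
    rw [AddMonoidHom.comp_apply, AddMonoidHom.coe_mulLeft, h φ hφ, one_pow, mul_one, mul_comm] at h2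
    exact h2
  · rintro H _ ⟨k, φ, s, hφ, rfl⟩
    simp only [AddMonoidHom.finsetSum_apply, AddMonoidHom.comp_apply, AddMonoidHom.coe_mulLeft]
    refine Ideal.sum_mem _ fun i _ => ?_
    rw [max_crit T hTsurj hTn]
    intro s'
    rw [h _ (hφ i), mul_right_comm, mul_comm, mul_comm (s i)]
    have := H (s i * s' ^ p ^ e) _ (hφ i)
    convert this using 3
    ring

theorem res_bij {A : Type*} [CommRing A] [IsLocalRing A] (I : Ideal A) [IsLocalRing (A ⧸ I)]
    [IsLocalHom (Ideal.Quotient.mk I)] :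
    Function.Bijective (ResidueField.map (Ideal.Quotient.mk I)) := by
  refine ⟨RingHom.injective _, fun y => ?_⟩
  obtain ⟨y, rfl⟩ := residue_surjective y
  obtain ⟨y, rfl⟩ := Ideal.Quotient.mk_surjective y
  exact ⟨residue A y, rfl⟩

end Aux

/-- **Transformation rule for splitting ratios under finite covers:**
`[l : k] · r(S, f^*C) = [κ(sp(S,f^*C)) : κ(sp(R,C))] · r(R, C)`. -/
theorem splittingRatio_transformation_rule
    (p : ℕ) (hp : p.Prime) (R S : Type*) [CommRing R] [CommRing S]
    [IsDomain R] [IsDomain S] [IsNoetherianRing R] [IsNoetherianRing S]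
    [IsLocalRing R] [IsLocalRing S] [CharP R p] [CharP S p]
    [Algebra R S] [Module.Finite R S]
    (hinj : Function.Injective (algebraMap R S))
    (hloc : (IsLocalRing.maximalIdeal S).comap (algebraMap R S) = IsLocalRing.maximalIdeal R)
    [IsLocalHom (algebraMap R S)]
    (hFfR : letI := frobModule p hp R; Module.Finite R (FrobMod R))
    (hFfS : letI := frobModule p hp S; Module.Finite S (FrobMod S))
    (T : S →ₗ[R] R)
    (hσinj : Function.Injective ⇑(sigmaT R S T))
    (K : Type*) [Field K] [Algebra R K] [IsFractionRing R K]
    (hσgen : Function.Bijective ⇑(LinearMap.baseChange K (sigmaT R S T)))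
    (hTsurj : Function.Surjective ⇑T)
    (hTn : ∀ s ∈ IsLocalRing.maximalIdeal S, T s ∈ IsLocalRing.maximalIdeal R)
    (C : CartierStructure p R R) (tr : ℕ → (R →+ R) → (S →+ S))
    (htr : ∀ e, 1 ≤ e → ∀ φ ∈ C.carrier e,
      IsCartierMap p S e (tr e φ) ∧ IsTranspose p T e φ (tr e φ))
    (hFpure : (1 : R) ∉ spSet R C.carrier)
    (𝔭₀ : Ideal R) (h𝔭₀ : (𝔭₀ : Set R) = spSet R C.carrier) (h𝔭₀p : 𝔭₀.IsPrime)
    (𝔮₀ : Ideal S) (h𝔮₀ : (𝔮₀ : Set S) = spSet S (pushFam C.carrier tr)) (h𝔮₀p : 𝔮₀.IsPrime)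
    (hcomp : 𝔮₀.comap (algebraMap R S) = 𝔭₀)
    [IsLocalRing (R ⧸ 𝔭₀)] [IsLocalRing (S ⧸ 𝔮₀)]
    (aRb aSb : ℕ → ℕ)
    (haR : ∀ e, 1 ≤ e →
      ((aRb e : ℕ∞) : WithBot ℕ∞) = splitNum (R ⧸ 𝔭₀) (inducedFam 𝔭₀ C.carrier e))
    (haS : ∀ e, 1 ≤ e →
      ((aSb e : ℕ∞) : WithBot ℕ∞) =
        splitNum (S ⧸ 𝔮₀) (inducedFam 𝔮₀ (pushFam C.carrier tr) e))
    (hex : ∃ e, 1 ≤ e ∧ aRb e ≠ 0)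
    (n₀ : ℕ) (hn₀pos : 0 < n₀)
    (hn₀dvd : ∀ e, 1 ≤ e → aRb e ≠ 0 → n₀ ∣ e)
    (hn₀gcd : ∀ m : ℕ, (∀ e, 1 ≤ e → aRb e ≠ 0 → m ∣ e) → m ∣ n₀)
    (db db' : ℕ) (hdb : ringKrullDim (R ⧸ 𝔭₀) = db) (hdb' : ringKrullDim (S ⧸ 𝔮₀) = db')
    [CharP (IsLocalRing.ResidueField R) p] [CharP (IsLocalRing.ResidueField S) p]
    (rk : ℕ)
    (hrk : letI := frobModule p hp (IsLocalRing.ResidueField R)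
      rk = Module.finrank (IsLocalRing.ResidueField R) (FrobMod (IsLocalRing.ResidueField R)))
    (rl : ℕ)
    (hrl : letI := frobModule p hp (IsLocalRing.ResidueField S)
      rl = Module.finrank (IsLocalRing.ResidueField S) (FrobMod (IsLocalRing.ResidueField S)))
    (lk : ℕ)
    (hlk : letI : Algebra (IsLocalRing.ResidueField R) (IsLocalRing.ResidueField S) :=
        (IsLocalRing.ResidueField.map (algebraMap R S)).toAlgebra
      lk = Module.finrank (IsLocalRing.ResidueField R) (IsLocalRing.ResidueField S))
    (F₁ F₂ : Type*) [Field F₁] [Field F₂]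
    [Algebra (R ⧸ 𝔭₀) F₁] [IsFractionRing (R ⧸ 𝔭₀) F₁]
    [Algebra (S ⧸ 𝔮₀) F₂] [IsFractionRing (S ⧸ 𝔮₀) F₂] [Algebra F₁ F₂]
    (hcompat : ∀ x : R ⧸ 𝔭₀, algebraMap F₁ F₂ (algebraMap (R ⧸ 𝔭₀) F₁ x) =
      algebraMap (S ⧸ 𝔮₀) F₂ (Ideal.quotientMap 𝔮₀ (algebraMap R S) hcomp.ge x))
    (dLK : ℕ) (hdLK : dLK = Module.finrank F₁ F₂)
    (rR rS : ℝ)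
    (hrR : Filter.Tendsto
      (fun e : ℕ => (aRb (n₀ * e) : ℝ) / ((p : ℝ) ^ (n₀ * e * db) * (rk : ℝ) ^ (n₀ * e)))
      Filter.atTop (nhds rR))
    (hrS : Filter.Tendsto
      (fun e : ℕ => (aSb (n₀ * e) : ℝ) / ((p : ℝ) ^ (n₀ * e * db') * (rl : ℝ) ^ (n₀ * e)))
      Filter.atTop (nhds rS)) :
    (lk : ℝ) * rS = (dLK : ℝ) * rR := by
  classical
  have : Fact p.Prime := ⟨hp⟩
  have hp𝔭 : ∀ r, r ∈ 𝔭₀ ↔ ∀ e, 1 ≤ e → ∀ φ ∈ C.carrier e, φ r ∈ IsLocalRing.maximalIdeal R := by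
    intro r
    rw [← SetLike.mem_coe, h𝔭₀]; rfl
  have hp𝔮 : ∀ s, s ∈ 𝔮₀ ↔ ∀ b, T (s * b) ∈ 𝔭₀ := by
    intro s
    rw [← SetLike.mem_coe, h𝔮₀]
    have h1 : s ∈ spSet S (pushFam C.carrier tr) ↔ ∀ e, 1 ≤ e → ∀ ψ ∈ pushFam C.carrier tr e,
      ψ s ∈ IsLocalRing.maximalIdeal S := Iff.rfl
    rw [h1]
    constructor
    · intro h b
      rw [hp𝔭]
      intro e he
      exact (push_crit T hTsurj hTn C.carrier tr (fun φ hφ => (htr e he φ hφ).2) s).1 (h e he) b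
    · intro h e he
      refine (push_crit T hTsurj hTn C.carrier tr (fun φ hφ => (htr e he φ hφ).2) s).2 fun b => ?_
      exact (hp𝔭 _).1 (h b) e he
  have hpres : ∀ e, 1 ≤ e → ∀ φ ∈ C.carrier e, ∀ x ∈ 𝔭₀, φ x ∈ 𝔭₀ := by
    intro e he φ hφ x hx
    rw [hp𝔭]
    intro d hd ψ hψ
    exact (hp𝔭 x).1 hx _ (by omega) _ (C.comp_mem d e hd he ψ hψ φ hφ)
  have hpres' : ∀ e, 1 ≤ e → ∀ ψ ∈ pushFam C.carrier tr e, ∀ x ∈ 𝔮₀, ψ x ∈ 𝔮₀ := by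
    rintro e he _ ⟨k, φ, s, hφ, rfl⟩ x hx
    simp only [AddMonoidHom.finsetSum_apply, AddMonoidHom.comp_apply, AddMonoidHom.coe_mulLeft]
    refine Ideal.sum_mem _ fun i _ => ?_
    rw [hp𝔮]
    intro b
    rw [(htr e he _ (hφ i)).2]
    refine hpres e he _ (hφ i) _ ?_
    have := (hp𝔮 x).1 hx (s i * b ^ p ^ e)
    convert this using 2
    ring
  have hGR : ∀ e, 1 ≤ e → GoodFam p e (inducedFam 𝔭₀ C.carrier e) := fun e he =>
    (car_good C he).induced 𝔭₀
  have hGS : ∀ e, 1 ≤ e → GoodFam p e (inducedFam 𝔮₀ (pushFam C.carrier tr) e) := fun e he =>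
    (push_good C.carrier tr (fun φ hφ => (htr e he φ hφ).1)).induced 𝔮₀
  let ι : (R ⧸ 𝔭₀) →+* (S ⧸ 𝔮₀) := Ideal.quotientMap 𝔮₀ (algebraMap R S) hcomp.ge
  letI : Algebra (R ⧸ 𝔭₀) (S ⧸ 𝔮₀) := ι.toAlgebra
  have hιmk : ∀ r : R, algebraMap (R ⧸ 𝔭₀) (S ⧸ 𝔮₀) (Ideal.Quotient.mk 𝔭₀ r) =
      Ideal.Quotient.mk 𝔮₀ (algebraMap R S r) := fun r => rfl
  have hιinj : Function.Injective (algebraMap (R ⧸ 𝔭₀) (S ⧸ 𝔮₀)) := by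
    exact Ideal.quotientMap_injective' hcomp.le
  have hfin : Module.Finite (R ⧸ 𝔭₀) (S ⧸ 𝔮₀) := by
    have h0 : Module.Finite R (S ⧸ 𝔮₀) := inferInstance
    haveI : IsScalarTower R (R ⧸ 𝔭₀) (S ⧸ 𝔮₀) := IsScalarTower.of_algebraMap_eq fun r => rfl
    exact Module.Finite.of_restrictScalars_finite R _ _
  have hdomA : IsDomain (R ⧸ 𝔭₀) := Ideal.Quotient.isDomain 𝔭₀
  have hdomB : IsDomain (S ⧸ 𝔮₀) := Ideal.Quotient.isDomain 𝔮₀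
  have hdd : db = db' := by
    have := aux_dim_eq hιinj
    rw [hdb, hdb'] at this
    exact_mod_cast this
  subst hdd
  haveI : IsLocalHom (Ideal.Quotient.mk 𝔭₀) :=
    IsLocalHom.of_surjective _ Ideal.Quotient.mk_surjective
  haveI : IsLocalHom (Ideal.Quotient.mk 𝔮₀) :=
    IsLocalHom.of_surjective _ Ideal.Quotient.mk_surjective
  haveI : IsLocalHom (algebraMap (R ⧸ 𝔭₀) (S ⧸ 𝔮₀)) := by
    constructor
    intro a ha
    obtain ⟨r, rfl⟩ := Ideal.Quotient.mk_surjective a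
    rw [hιmk] at ha
    exact (isUnit_of_map_unit (algebraMap R S) r
      (isUnit_of_map_unit (Ideal.Quotient.mk 𝔮₀) _ ha)).map _
  haveI : CharP (R ⧸ 𝔭₀) p := by
    have h1 : ((p : ℕ) : R ⧸ 𝔭₀) = 0 := by
      rw [← map_natCast (Ideal.Quotient.mk 𝔭₀), CharP.cast_eq_zero, map_zero]
    exact (CharP.charP_iff_prime_eq_zero hp).2 h1
  haveI : CharP (S ⧸ 𝔮₀) p := by
    have h1 : ((p : ℕ) : S ⧸ 𝔮₀) = 0 := by
      rw [← map_natCast (Ideal.Quotient.mk 𝔮₀), CharP.cast_eq_zero, map_zero]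
    exact (CharP.charP_iff_prime_eq_zero hp).2 h1
  haveI : CharP (IsLocalRing.ResidueField (R ⧸ 𝔭₀)) p := by
    have h1 : ((p : ℕ) : IsLocalRing.ResidueField (R ⧸ 𝔭₀)) = 0 := by
      rw [← map_natCast (IsLocalRing.residue (R ⧸ 𝔭₀)), CharP.cast_eq_zero, map_zero]
    exact (CharP.charP_iff_prime_eq_zero hp).2 h1
  haveI : CharP (IsLocalRing.ResidueField (S ⧸ 𝔮₀)) p := by
    have h1 : ((p : ℕ) : IsLocalRing.ResidueField (S ⧸ 𝔮₀)) = 0 := by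
      rw [← map_natCast (IsLocalRing.residue (S ⧸ 𝔮₀)), CharP.cast_eq_zero, map_zero]
    exact (CharP.charP_iff_prime_eq_zero hp).2 h1
  haveI : ExpChar (R ⧸ 𝔭₀) p := .prime hp
  haveI : ExpChar (S ⧸ 𝔮₀) p := .prime hp
  haveI : ExpChar (IsLocalRing.ResidueField (R ⧸ 𝔭₀)) p := .prime hp
  haveI : ExpChar (IsLocalRing.ResidueField (S ⧸ 𝔮₀)) p := .prime hp
  haveI : ExpChar (IsLocalRing.ResidueField R) p := .prime hp
  haveI : ExpChar (IsLocalRing.ResidueField S) p := .prime hp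
  -- degrees
  have hlk1 : rdeg (IsLocalRing.ResidueField.map (algebraMap R S)) = lk := by
    rw [hlk, ← rdeg_algebraMap]; rfl
  have hlk0 : lk ≠ 0 := by
    have h1 : Module.finrank (IsLocalRing.ResidueField R) (IsLocalRing.ResidueField S) = lk := by
      rw [← hlk1, ← rdeg_algebraMap]; rfl
    rw [← h1]
    exact (Module.finrank_pos).ne'
  have hrk1 : rdeg (frobenius (IsLocalRing.ResidueField R) p) = rk := by
    rw [hrk]; rfl
  have hrl1 : rdeg (frobenius (IsLocalRing.ResidueField S) p) = rl := by
    rw [hrl]; rfl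
  have hkl : rk = rl := by
    rw [← hrk1, ← hrl1]
    exact rdeg_frob p (IsLocalRing.ResidueField.map (algebraMap R S)) (by rwa [hlk1])
  have hbR := rdeg_bij _ (res_bij 𝔭₀)
  have hbS := rdeg_bij _ (res_bij 𝔮₀)
  have hrA : rdeg (frobenius (IsLocalRing.ResidueField (R ⧸ 𝔭₀)) p) = rk := by
    rw [← hrk1]
    exact (rdeg_frob p (IsLocalRing.ResidueField.map (Ideal.Quotient.mk 𝔭₀))
      (by rw [hbR]; exact one_ne_zero)).symm
  have hrB : rdeg (frobenius (IsLocalRing.ResidueField (S ⧸ 𝔮₀)) p) = rk := by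
    rw [hkl, ← hrl1]
    exact (rdeg_frob p (IsLocalRing.ResidueField.map (Ideal.Quotient.mk 𝔮₀))
      (by rw [hbS]; exact one_ne_zero)).symm
  have hlkb : rdeg (IsLocalRing.ResidueField.map (algebraMap (R ⧸ 𝔭₀) (S ⧸ 𝔮₀))) = lk := by
    have hsq : (IsLocalRing.ResidueField.map (algebraMap (R ⧸ 𝔭₀) (S ⧸ 𝔮₀))).comp
        (IsLocalRing.ResidueField.map (Ideal.Quotient.mk 𝔭₀)) =
        (IsLocalRing.ResidueField.map (Ideal.Quotient.mk 𝔮₀)).comp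
        (IsLocalRing.ResidueField.map (algebraMap R S)) := by
      ext x
      obtain ⟨x, rfl⟩ := IsLocalRing.residue_surjective x
      rfl
    have := congrArg rdeg hsq
    rwa [rdeg_comp, rdeg_comp, hbR, hbS, hlk1, one_mul, mul_one] at this
  subst hkl
  by_cases hr0 : rk = 0
  · have hz : ∀ (a : ℕ → ℕ) (x : ℝ), Filter.Tendsto
        (fun e : ℕ => (a (n₀ * e) : ℝ) / ((p : ℝ) ^ (n₀ * e * db) * (rk : ℝ) ^ (n₀ * e)))
        Filter.atTop (nhds x) → x = 0 := by
      intro a x hx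
      refine tendsto_nhds_unique hx (tendsto_const_nhds.congr' ?_)
      filter_upwards [Filter.eventually_ge_atTop 1] with e he
      have : n₀ * e ≠ 0 := (Nat.mul_pos hn₀pos he).ne'
      simp [hr0, this]
    rw [hz _ _ hrR, hz _ _ hrS, mul_zero, mul_zero]
  have hdeg : Module.finrank (R ⧸ 𝔭₀) (S ⧸ 𝔮₀) = dLK := by
    letI : Algebra (R ⧸ 𝔭₀) F₂ := ((algebraMap (S ⧸ 𝔮₀) F₂).comp
      (algebraMap (R ⧸ 𝔭₀) (S ⧸ 𝔮₀))).toAlgebra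
    haveI : IsScalarTower (R ⧸ 𝔭₀) (S ⧸ 𝔮₀) F₂ := IsScalarTower.of_algebraMap_eq fun r => rfl
    haveI : IsScalarTower (R ⧸ 𝔭₀) F₁ F₂ := IsScalarTower.of_algebraMap_eq fun r => (hcompat r).symm
    rw [hdLK]
    exact (IsFractionRing.finrank_eq (R ⧸ 𝔭₀) F₁ (S ⧸ 𝔮₀) F₂).symm
  let T0 : (S ⧸ 𝔮₀) →+ (R ⧸ 𝔭₀) := QuotientAddGroup.lift (Submodule.toAddSubgroup 𝔮₀)
    ((Ideal.Quotient.mk 𝔭₀).toAddMonoidHom.comp T.toAddMonoidHom) (fun y hy => by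
      show Ideal.Quotient.mk 𝔭₀ (T y) = 0
      rw [Ideal.Quotient.eq_zero_iff_mem]
      have := (hp𝔮 y).1 hy 1
      rwa [mul_one] at this)
  have hT0 : ∀ s, T0 (Ideal.Quotient.mk 𝔮₀ s) = Ideal.Quotient.mk 𝔭₀ (T s) := fun s => rfl
  let Tb : (S ⧸ 𝔮₀) →ₗ[R ⧸ 𝔭₀] (R ⧸ 𝔭₀) :=
    { toFun := T0
      map_add' := map_add T0
      map_smul' := by
        intro a b
        obtain ⟨r, rfl⟩ := Ideal.Quotient.mk_surjective a
        obtain ⟨s, rfl⟩ := Ideal.Quotient.mk_surjective b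
        rw [Algebra.smul_def, hιmk, ← map_mul, hT0, hT0, ← Algebra.smul_def, map_smul]
        rfl }
  have hTb : ∀ s, Tb (Ideal.Quotient.mk 𝔮₀ s) = Ideal.Quotient.mk 𝔭₀ (T s) := fun s => rfl
  have hTnd : ∀ b, (∀ b', Tb (b * b') = 0) → b = 0 := by
    intro b hb
    obtain ⟨s, rfl⟩ := Ideal.Quotient.mk_surjective b
    rw [Ideal.Quotient.eq_zero_iff_mem, hp𝔮]
    intro s'
    rw [← Ideal.Quotient.eq_zero_iff_mem, ← hTb, map_mul]
    exact hb _
  obtain ⟨Cc, hCc⟩ := core p db hdb Tb hTnd rk lk hr0 hlk0 hrA hrB hlkb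
  refine core_lim p n₀ db rk lk dLK Cc hp hn₀pos hr0 aRb aSb (fun e he => ?_) rR rS hrR hrS
  rw [← hdeg]
  refine hCc e _ _ (hGR e he) (hGS e he) (fun b => ?_) _ _ (haR e he) (haS e he)
  obtain ⟨s, rfl⟩ := Ideal.Quotient.mk_surjective b
  rw [GoodFam.mem_J, induced_mem 𝔮₀ _ e (hpres' e he),
    push_crit T hTsurj hTn C.carrier tr (fun φ hφ => (htr e he φ hφ).2)]
  have key : ∀ b, (Tb (Ideal.Quotient.mk 𝔮₀ s * Ideal.Quotient.mk 𝔮₀ b) ∈ (hGR e he).J ↔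
      ∀ φ ∈ C.carrier e, φ (T (s * b)) ∈ IsLocalRing.maximalIdeal R) := by
    intro b
    rw [← map_mul, hTb, GoodFam.mem_J, induced_mem 𝔭₀ _ e (hpres e he)]
  constructor
  · intro h b'
    obtain ⟨b, rfl⟩ := Ideal.Quotient.mk_surjective b'
    exact (key b).2 (h b)
  · intro h b
    exact (key b).1 (h _)
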